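/- Let γ ∈ (0,1), T, T_max ∈ ℕ with 1 ≤ T_max and T ≤ T_max, ε > 0, and G_max ≥ 0. Let (g_t)_{t∈ℕ} and (V_t)_{t∈ℕ} be real sequences such that g_t ≤ G_max for all t ≤ T, g_T < -ε, and V_t = (1-γ)·g_t + γ·min(g_t, V_{t+1}) for all t ≤ T. If γ^{T_max}·ε > (1 - γ^{T_max})·G_max, then V_0 < 0. -/

import Mathlib

/-!
Bounding `min (g t) (V (t + 1))` by `V (t + 1)` and `g t` by `Gmax` turns the Bellman recursion
into `V t - Gmax ≤ γ * (V (t + 1) - Gmax)`, so that `V 0 - Gmax ≤ γ ^ T * (V T - Gmax)`. At the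
goal the other branch of the minimum gives `V T ≤ g T`. Hence `V 0` is at most the average of `Gmax`
and `-ε` with weights `1 - γ ^ T` and `γ ^ T`, which `T ≤ Tmax` and the bound on `ε` make negative
when `0 ≤ Gmax`; when `Gmax < 0`, already `V 0 ≤ g 0 ≤ Gmax < 0`.
-/

section GeometricDecay

variable {R : Type*} [Semiring R] [PartialOrder R] [IsOrderedRing R]

theorem le_pow_mul_of_forall_le_mul_succ {c : R} (hc : 0 ≤ c) {u : ℕ → R} {n : ℕ}
    (hu : ∀ t < n, u t ≤ c * u (t + 1)) : u 0 ≤ c ^ n * u n := by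
  induction n with
  | zero => simp
  | succ n ih =>
    calc u 0 ≤ c ^ n * u n := ih fun t ht => hu t (Nat.lt_succ_of_lt ht)
      _ ≤ c ^ n * (c * u (n + 1)) :=
        mul_le_mul_of_nonneg_left (hu n n.lt_succ_self) (pow_nonneg hc n)
      _ = c ^ (n + 1) * u (n + 1) := by rw [pow_succ, mul_assoc]

end GeometricDecay

section DiscountedReachability

variable {R : Type*} [CommRing R] [LinearOrder R] [IsOrderedRing R]

/-- The discounted reachability Bellman backup with discount factor `γ`, where `a` is the value of
the goal function at the current state and `v` is the value of the successor state. -/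
def discountedReachBackup (γ a v : R) : R :=
  (1 - γ) * a + γ * min a v

theorem discountedReachBackup_le_left {γ : R} (hγ : 0 ≤ γ) (a v : R) :
    discountedReachBackup γ a v ≤ a :=
  calc (1 - γ) * a + γ * min a v ≤ (1 - γ) * a + γ * a := by gcongr; exact min_le_left a v
    _ = a := by ring

theorem discountedReachBackup_sub_le {γ a G : R} (hγ0 : 0 ≤ γ) (hγ1 : γ ≤ 1) (ha : a ≤ G) (v : R) :
    discountedReachBackup γ a v - G ≤ γ * (v - G) :=
  calc (1 - γ) * a + γ * min a v - G ≤ (1 - γ) * G + γ * v - G :=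
        sub_le_sub_right (add_le_add (mul_le_mul_of_nonneg_left ha (sub_nonneg.2 hγ1))
          (mul_le_mul_of_nonneg_left (min_le_right a v) hγ0)) G
    _ = γ * (v - G) := by ring

theorem discountedReach_value_zero_le {γ G : R} (hγ0 : 0 ≤ γ) (hγ1 : γ ≤ 1) {T : ℕ} {g V : ℕ → R}
    (hg : ∀ t < T, g t ≤ G)
    (hV : ∀ t ≤ T, V t = discountedReachBackup γ (g t) (V (t + 1))) :
    V 0 ≤ (1 - γ ^ T) * G + γ ^ T * g T := by
  have hstep : ∀ t < T, V t - G ≤ γ * (V (t + 1) - G) := fun t ht => by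
    rw [hV t ht.le]
    exact discountedReachBackup_sub_le hγ0 hγ1 (hg t ht) _
  have hdecay : V 0 - G ≤ γ ^ T * (V T - G) :=
    le_pow_mul_of_forall_le_mul_succ (u := fun t => V t - G) hγ0 hstep
  have hgoal : V T ≤ g T := (hV T le_rfl).trans_le (discountedReachBackup_le_left hγ0 _ _)
  calc V 0 ≤ G + γ ^ T * (V T - G) := sub_le_iff_le_add'.1 hdecay
    _ ≤ G + γ ^ T * (g T - G) := by gcongr
    _ = (1 - γ ^ T) * G + γ ^ T * g T := by ring

theorem discounted_value_negative_of_reaching_goal_general {γ : R} (hγ0 : 0 ≤ γ) (hγ1 : γ ≤ 1)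
    {T Tmax : ℕ} (hT : T ≤ Tmax) {ε Gmax : R} {g V : ℕ → R}
    (hg : ∀ t ≤ T, g t ≤ Gmax) (hgT : g T ≤ -ε)
    (hV : ∀ t ≤ T, V t = discountedReachBackup γ (g t) (V (t + 1)))
    (hkey : (1 - γ ^ Tmax) * Gmax < γ ^ Tmax * ε) :
    V 0 < 0 := by
  rcases lt_or_ge Gmax 0 with hneg | hnonneg
  · calc V 0 = discountedReachBackup γ (g 0) (V 1) := hV 0 T.zero_le
      _ ≤ g 0 := discountedReachBackup_le_left hγ0 _ _
      _ ≤ Gmax := hg 0 T.zero_le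
      _ < 0 := hneg
  · have hgap : Gmax < γ ^ Tmax * (Gmax + ε) :=
      calc Gmax = (1 - γ ^ Tmax) * Gmax + γ ^ Tmax * Gmax := by ring
        _ < γ ^ Tmax * ε + γ ^ Tmax * Gmax := by gcongr
        _ = γ ^ Tmax * (Gmax + ε) := by ring
    have hpow : γ ^ Tmax ≤ γ ^ T := pow_le_pow_of_le_one hγ0 hγ1 hT
    have hsum : 0 ≤ Gmax + ε :=
      le_of_not_gt fun hlt => (hnonneg.trans_lt hgap).not_ge
        (mul_nonpos_of_nonneg_of_nonpos (pow_nonneg hγ0 Tmax) hlt.le)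
    calc V 0 ≤ (1 - γ ^ T) * Gmax + γ ^ T * g T :=
          discountedReach_value_zero_le hγ0 hγ1 (fun t ht => hg t ht.le) hV
      _ ≤ (1 - γ ^ T) * Gmax + γ ^ T * -ε := by gcongr
      _ = Gmax - γ ^ T * (Gmax + ε) := by ring
      _ ≤ Gmax - γ ^ Tmax * (Gmax + ε) := by gcongr
      _ < 0 := sub_neg.2 hgap

end DiscountedReachability

/-- If `γ ∈ (0,1)`, `1 ≤ Tmax`, `T ≤ Tmax`, `ε > 0`, `Gmax ≥ 0`, the sequence
`g` is bounded by `Gmax` up to time `T`, `g T < -ε`, the discounted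
reachability Bellman recursion `V t = (1-γ) g t + γ min (g t) (V (t+1))` holds
for all `t ≤ T`, and `γ^Tmax * ε > (1 - γ^Tmax) * Gmax`, then `V 0 < 0`. -/
theorem discounted_value_negative_of_reaching_goal
    (γ : ℝ) (hγ0 : 0 < γ) (hγ1 : γ < 1)
    (T Tmax : ℕ) (hTmax : 1 ≤ Tmax) (hT : T ≤ Tmax)
    (ε : ℝ) (hε : 0 < ε) (Gmax : ℝ) (hG : 0 ≤ Gmax)
    (g V : ℕ → ℝ)
    (hg : ∀ t ≤ T, g t ≤ Gmax) (hgT : g T < -ε)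
    (hV : ∀ t ≤ T, V t = (1 - γ) * g t + γ * min (g t) (V (t + 1)))
    (hkey : (1 - γ ^ Tmax) * Gmax < γ ^ Tmax * ε) :
    V 0 < 0 :=
  discounted_value_negative_of_reaching_goal_general hγ0.le hγ1.le hT hg hgT.le hV hkey
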